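/- arXiv:1102.2127 — 11 statements merged into one kernel-verified Lean document; each statement's English description precedes it below -/
import Mathlib

section
/- Let G be a groupoid (a set with a binary operation *) that is idempotent (x*x = x for all x). If for some n ≥ 3 the identity ⟨x₁⋯xₙ⟩_L = ⟨x₁⋯xₙ⟩_R holds for all x₁,…,xₙ ∈ G (the left-associated product equals the right-associated product of any n elements), then G is a semigroup, i.e. * is associative. -/
/-- The left-associated product `((x * l₁) * l₂) * ⋯ * lₘ`. -/
def leftAssoc {G : Type*} (op : G → G → G) (x : G) (l : List G) : G :=
  l.foldl op x

/-- The right-associated product `x * (l₁ * (l₂ * (⋯ * lₘ)))`. -/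
def rightAssoc {G : Type*} (op : G → G → G) : G → List G → G
  | x, [] => x
  | x, y :: l => op x (rightAssoc op y l)

/-!
Write `f` for left multiplication by `x`. Padding a word that starts with `x` by further copies of
`x` leaves its left-associated product unchanged, by idempotence, and applies powers of `f` to its
right-associated product. The words `x⋯xy`, `x⋯xyz` and `x⋯xy⋯y` thus turn the identity into
`fⁿ⁻²(xy) = xy`, `(xy)z = fⁿ⁻²(yz)` and `fᵏ⁺¹(y)y = fᵏ(y)` for `1 ≤ k ≤ n - 2`.
Put `a = xy`. If `fᵏ⁺¹(a) = a`, the last relation gives `fᵏ(a) = aa = a`, so descending from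
`fⁿ⁻²(a) = a` we reach `f(a) = a`. Hence `f` is idempotent, and `fⁿ⁻²(yz)` collapses to `x(yz)`.
-/

/-- The identity `⟨x₀x₁⋯xₘ⟩_L = ⟨x₀x₁⋯xₘ⟩_R`. The parameter `m` is the number of multiplications,
one less than the number of variables. -/
def LeftAssocEqRightAssoc {G : Type*} (op : G → G → G) (m : ℕ) : Prop :=
  ∀ (x : G) (l : List G), l.length = m → leftAssoc op x l = rightAssoc op x l

section

open Function

variable {G : Type*} {op : G → G → G} {x y : G}

theorem leftAssoc_concat (op : G → G → G) (x y : G) (l : List G) :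
    leftAssoc op x (l ++ [y]) = op (leftAssoc op x l) y :=
  List.foldl_concat op x y l

theorem leftAssoc_replicate_append (hx : op x x = x) (k : ℕ) (l : List G) :
    leftAssoc op x (List.replicate k x ++ l) = leftAssoc op x l := by
  induction k with
  | zero => rfl
  | succ k ih =>
    calc leftAssoc op x (List.replicate (k + 1) x ++ l)
      _ = leftAssoc op (op x x) (List.replicate k x ++ l) := rfl
      _ = leftAssoc op x l := by rw [hx, ih]

theorem rightAssoc_replicate_append (op : G → G → G) (x : G) (k : ℕ) (l : List G) :
    rightAssoc op x (List.replicate k x ++ l) = (op x)^[k] (rightAssoc op x l) := by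
  induction k with
  | zero => rfl
  | succ k ih =>
    calc rightAssoc op x (List.replicate (k + 1) x ++ l)
      _ = op x (rightAssoc op x (List.replicate k x ++ l)) := rfl
      _ = (op x)^[k + 1] (rightAssoc op x l) := by rw [ih, iterate_succ_apply']

theorem rightAssoc_replicate_self (hx : op x x = x) (k : ℕ) :
    rightAssoc op x (List.replicate k x) = x := by
  simpa only [List.append_nil] using
    (rightAssoc_replicate_append op x k []).trans (IsFixedPt.iterate hx k)

namespace LeftAssocEqRightAssoc

variable {m : ℕ}

theorem leftAssoc_eq_iterate_rightAssoc (h : LeftAssocEqRightAssoc op m) (hx : op x x = x)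
    {k : ℕ} {l : List G} (hk : k + l.length = m) :
    leftAssoc op x l = (op x)^[k] (rightAssoc op x l) := by
  rw [← leftAssoc_replicate_append hx k, ← rightAssoc_replicate_append]
  exact h x _ (by rw [List.length_append, List.length_replicate, hk])

theorem leftAssoc_replicate_succ (h : LeftAssocEqRightAssoc op m) (hx : op x x = x)
    (hy : op y y = y) {j k : ℕ} (hjk : k + (j + 1) = m) :
    leftAssoc op x (List.replicate (j + 1) y) = (op x)^[k + 1] y :=
  calc leftAssoc op x (List.replicate (j + 1) y)
    _ = (op x)^[k] (op x (rightAssoc op y (List.replicate j y))) :=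
      h.leftAssoc_eq_iterate_rightAssoc hx (by rw [List.length_replicate, hjk])
    _ = (op x)^[k + 1] y := by rw [rightAssoc_replicate_self hy, iterate_succ_apply]

theorem op_iterate_self (h : LeftAssocEqRightAssoc op m) (hx : op x x = x) (hy : op y y = y)
    {k : ℕ} (hk : k + 2 ≤ m) : op ((op x)^[k + 2] y) y = (op x)^[k + 1] y := by
  obtain ⟨j, rfl⟩ := Nat.exists_eq_add_of_le hk
  calc op ((op x)^[k + 2] y) y
    _ = op (leftAssoc op x (List.replicate (j + 1) y)) y := by
      rw [h.leftAssoc_replicate_succ hx hy (k := k + 1) (by omega)]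
    _ = leftAssoc op x (List.replicate (j + 2) y) := by
      rw [← leftAssoc_concat op, ← List.replicate_succ']
    _ = (op x)^[k + 1] y := h.leftAssoc_replicate_succ hx hy (by omega)

theorem isPeriodicPt_op (h : LeftAssocEqRightAssoc op (m + 1)) (hx : op x x = x) (y : G) :
    IsPeriodicPt (op x) m (op x y) :=
  (h.leftAssoc_eq_iterate_rightAssoc hx (l := [y]) rfl).symm

theorem isFixedPt_op (h : LeftAssocEqRightAssoc op (m + 2)) (hx : op x x = x)
    (hxy : op (op x y) (op x y) = op x y) : IsFixedPt (op x) (op x y) := by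
  have descend (k : ℕ) (hk : k < m) (period : IsPeriodicPt (op x) (k + 2) (op x y)) :
      IsPeriodicPt (op x) (k + 1) (op x y) :=
    calc (op x)^[k + 1] (op x y)
      _ = op ((op x)^[k + 2] (op x y)) (op x y) := (h.op_iterate_self hx hxy (by omega)).symm
      _ = op x y := by rw [period.eq, hxy]
  exact Nat.decreasingInduction (motive := fun k _ ↦ IsPeriodicPt (op x) (k + 1) (op x y))
    descend (h.isPeriodicPt_op hx y) (Nat.zero_le m)

end LeftAssocEqRightAssoc

end

/-- If an idempotent groupoid satisfies
`⟨x₁⋯xₙ⟩_L = ⟨x₁⋯xₙ⟩_R` for some `n ≥ 3`, then it is a semigroup. -/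
theorem idempotent_leftAssoc_eq_rightAssoc_implies_assoc
    {G : Type*} (op : G → G → G)
    (idem : ∀ x : G, op x x = x)
    (n : ℕ) (hn : 3 ≤ n)
    (h : ∀ (x : G) (l : List G), l.length = n - 1 →
      leftAssoc op x l = rightAssoc op x l) :
    ∀ x y z : G, op (op x y) z = op x (op y z) := by
  obtain ⟨m, rfl⟩ := Nat.exists_eq_add_of_le' hn
  have identity : LeftAssocEqRightAssoc op (m + 2) := h
  intro x y z
  calc op (op x y) z
    _ = (op x)^[m] (op x (op y z)) :=
      identity.leftAssoc_eq_iterate_rightAssoc (idem x) (l := [y, z]) rfl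
    _ = op x (op y z) := (identity.isFixedPt_op (idem x) (idem _)).iterate m
end

section
/- Every idempotent groupoid satisfying the identity x*((y*z)*u) = (x*y)*(z*u) for all x, y, z, u is a semigroup, i.e. its operation is associative. -/
theorem op_op_self_right_of_idempotent {G : Type*} {op : G → G → G}
    (idem : ∀ x : G, op x x = x)
    (diagonal : ∀ x y z : G, op x (op (op y z) z) = op (op x y) z) (x y : G) :
    op (op x y) y = op x y :=
  calc
    op (op x y) y = op x (op (op y y) y) := (diagonal x y y).symm
    _ = op x y := by rw [idem, idem]

/-- Every idempotent groupoid satisfying `x*((y*z)*u) = (x*y)*(z*u)` is a semigroup. -/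
theorem idempotent_B2_eq_B3_implies_assoc
    {G : Type*} (op : G → G → G)
    (idem : ∀ x : G, op x x = x)
    (h : ∀ x y z u : G, op x (op (op y z) u) = op (op x y) (op z u)) :
    ∀ x y z : G, op (op x y) z = op x (op y z) := by
  have diagonal (x y z : G) : op x (op (op y z) z) = op (op x y) z := by
    rw [h, idem]
  intro x y z
  calc
    op (op x y) z = op x (op (op y z) z) := (diagonal x y z).symm
    _ = op x (op y z) := by rw [op_op_self_right_of_idempotent idem diagonal]
end

section
/- Let G be a groupoid satisfying the identity x*(y*(z*u)) = x*((y*z)*u) for all x, y, z, u ∈ G. Then for every n ≥ 1, every bracketing B of size n, every list x₁,…,xₙ of elements of G, and every x ∈ G, one has x * B(x₁,…,xₙ) = x * ⟨x₁⋯xₙ⟩_R. In particular, if t₁ ≈ t₂ is an identity between two bracketings of the same product (an identity valid in every semigroup), then x*t₁ = x*t₂ holds in G. -/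
/-- A bracketing: a full binary tree. Its leaves, read from left to right,
carry the variables of the bracketed product. -/
inductive Bracketing : Type
  | leaf : Bracketing
  | node : Bracketing → Bracketing → Bracketing

/-- The size of a bracketing: its number of leaves. -/
def Bracketing.size : Bracketing → ℕ
  | .leaf => 1
  | .node P Q => P.size + Q.size

/-- Evaluate a bracketing in a groupoid `(G, op)` on the variables
`f i, f (i+1), …` (assigned to the leaves from left to right). -/
def Bracketing.eval {G : Type*} (op : G → G → G) : Bracketing → (ℕ → G) → ℕ → G
  | .leaf, f, i => f i
  | .node P Q, f, i => op (P.eval op f i) (Q.eval op f (i + P.size))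

/-- The right-associated product `f i * (f (i+1) * (⋯ * f (i+m)))`. -/
def rightAssocFrom {G : Type*} (op : G → G → G) (f : ℕ → G) : ℕ → ℕ → G
  | i, 0 => f i
  | i, m + 1 => op (f i) (rightAssocFrom op f (i + 1) m)

/-!
Write `L a` for left multiplication by `a`. The identity says that `L x ∘ L (y * z)` equals
`L x ∘ L y ∘ L z`, so behind any further left factor a product acts by left multiplication as its
factors do one after the other. By induction a bracketing `B` of `x₁, …, xₙ` then satisfies
`x * (B * u) = x * (x₁ * (⋯ * (xₙ * u)))`, and this dissolves the left subtree of every node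
below `x`. The tail `u` is what makes the induction work: `x * a = x * b` alone does not give
`x * (a * u) = x * (b * u)`.
-/

theorem Bracketing.size_pos : ∀ B : Bracketing, 0 < B.size
  | .leaf => Nat.one_pos
  | .node P _ => Nat.add_pos_left P.size_pos _

section

variable {G : Type*} {op : G → G → G}

theorem rightAssocFrom_add_eq_foldr (f : ℕ → G) (i m k : ℕ) :
    rightAssocFrom op f i (m + k) =
      (List.range' i m).foldr (fun j ↦ op (f j)) (rightAssocFrom op f (i + m) k) := by
  induction m generalizing i with
  | zero => rw [Nat.zero_add]; rfl
  | succ m ih =>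
    rw [Nat.add_right_comm, rightAssocFrom, ih, List.range'_succ, List.foldr_cons,
      Nat.add_right_comm i, Nat.add_assoc i]

theorem Bracketing.op_op_eval_eq_op_foldr
    (hA : ∀ x y z u : G, op x (op y (op z u)) = op x (op (op y z) u))
    (B : Bracketing) (f : ℕ → G) (i : ℕ) (x u : G) :
    op x (op (B.eval op f i) u) =
      op x ((List.range' i B.size).foldr (fun j ↦ op (f j)) u) := by
  induction B generalizing i x u with
  | leaf => rfl
  | node P Q ihP ihQ =>
    calc op x (op (op (P.eval op f i) (Q.eval op f (i + P.size))) u)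
        = op x (op (P.eval op f i) (op (Q.eval op f (i + P.size)) u)) := (hA ..).symm
      _ = op x (op (P.eval op f i)
            ((List.range' (i + P.size) Q.size).foldr (fun j ↦ op (f j)) u)) := by rw [ihQ]
      _ = op x ((List.range' i P.size).foldr (fun j ↦ op (f j))
            ((List.range' (i + P.size) Q.size).foldr (fun j ↦ op (f j)) u)) := ihP ..
      _ = op x ((List.range' i (P.size + Q.size)).foldr (fun j ↦ op (f j)) u) := by
        rw [← List.foldr_append, List.range'_append_1]

theorem Bracketing.op_eval_eq_op_rightAssocFrom
    (hA : ∀ x y z u : G, op x (op y (op z u)) = op x (op (op y z) u))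
    (B : Bracketing) (f : ℕ → G) (i : ℕ) (x : G) :
    op x (B.eval op f i) = op x (rightAssocFrom op f i (B.size - 1)) := by
  induction B generalizing i x with
  | leaf => rfl
  | node P Q _ ihQ =>
    calc op x (op (P.eval op f i) (Q.eval op f (i + P.size)))
        = op x (op (P.eval op f i) (rightAssocFrom op f (i + P.size) (Q.size - 1))) := by rw [ihQ]
      _ = op x ((List.range' i P.size).foldr (fun j ↦ op (f j))
            (rightAssocFrom op f (i + P.size) (Q.size - 1))) := P.op_op_eval_eq_op_foldr hA ..
      _ = op x (rightAssocFrom op f i (P.size + Q.size - 1)) := by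
        rw [← rightAssocFrom_add_eq_foldr, Nat.add_sub_assoc Q.size_pos]

end

/-- In a groupoid satisfying `x*(y*(z*u)) = x*((y*z)*u)`, for every bracketing `B`
one has `x * B(x₁,…,xₙ) = x * ⟨x₁⋯xₙ⟩_R`; in particular `x*t₁ = x*t₂` for any
two bracketings `t₁, t₂` of the same product. -/
theorem mul_bracketing_eq_mul_rightAssoc
    {G : Type*} (op : G → G → G)
    (hA : ∀ x y z u : G, op x (op y (op z u)) = op x (op (op y z) u)) :
    (∀ (B : Bracketing) (f : ℕ → G) (x : G),
      op x (B.eval op f 0) = op x (rightAssocFrom op f 0 (B.size - 1))) ∧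
    (∀ (B B' : Bracketing) (f : ℕ → G) (x : G), B.size = B'.size →
      op x (B.eval op f 0) = op x (B'.eval op f 0)) := by
  refine ⟨fun B f x ↦ B.op_eval_eq_op_rightAssocFrom hA f 0 x, fun B B' f x hsize ↦ ?_⟩
  rw [B.op_eval_eq_op_rightAssocFrom hA, B'.op_eval_eq_op_rightAssocFrom hA, hsize]
end

section
/- Let G be a groupoid satisfying the identity x*(y*(z*u)) = x*((y*z)*u) for all x, y, z, u ∈ G, and let B and B′ be two bracketings of size n. If the sets {|lⁱ(B)| : i ≥ 1} and {|lⁱ(B′)| : i ≥ 1} of iterated left-factor sizes of B and B′ coincide, then B and B′ induce the same n-ary function on G, i.e. B(x₁,…,xₙ) = B′(x₁,…,xₙ) for all x₁,…,xₙ ∈ G. -/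
/-- The list `|l(B)|, |l²(B)|, …` of sizes of the iterated left factors of a
bracketing `B`. -/
def Bracketing.leftFactorSizes : Bracketing → List ℕ
  | .leaf => []
  | .node P _ => P.size :: P.leftFactorSizes

/-!
Associativity holds in `G` under any left multiplication, so the value of `x * Q` depends on the
bracketing `Q` only through its size: every right factor may be replaced by a right comb. Unfolding
`B` along its left spine, `B = (⋯((x₁ * Q₁) * Q₂) ⋯) * Qₖ`, only the sizes of the `Qⱼ` matter, and
these are the differences of consecutive terms of `|B|, |l(B)|, |l²(B)|, …`. Since this sequence
strictly decreases, it is determined by the set of its terms.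
-/

namespace Bracketing

theorem size_pos_s8 : ∀ B : Bracketing, 0 < B.size
  | leaf => Nat.one_pos
  | node P _ => Nat.add_pos_left P.size_pos_s8 _

theorem lt_size_of_mem_leftFactorSizes {m : ℕ} :
    ∀ {B : Bracketing}, m ∈ B.leftFactorSizes → m < B.size
  | node P Q, hm => by
    have hPQ : P.size < (node P Q).size := Nat.lt_add_of_pos_right Q.size_pos_s8
    rcases List.mem_cons.1 hm with rfl | hmP
    · exact hPQ
    · exact (lt_size_of_mem_leftFactorSizes hmP).trans hPQ

theorem sortedGT_leftFactorSizes (B : Bracketing) : B.leftFactorSizes.SortedGT := by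
  refine List.Pairwise.sortedGT ?_
  induction B with
  | leaf => exact List.Pairwise.nil
  | node P _ ihP => exact ihP.cons fun _ => lt_size_of_mem_leftFactorSizes

/-- The right comb `x₀ * (x₁ * (⋯ * xₖ))`, the normal form of a right factor. It is indexed by its
number `k` of products, so that it has `k + 1` leaves. -/
def rightComb : ℕ → Bracketing
  | 0 => leaf
  | k + 1 => node leaf (rightComb k)

section Eval

variable {G : Type*} {op : G → G → G}
  (hA : ∀ x y z u : G, op x (op y (op z u)) = op x (op (op y z) u)) (f : ℕ → G)
include hA

theorem op_eval_node_rightComb (P : Bracketing) (x : G) (k i : ℕ) :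
    op x ((node P (rightComb k)).eval op f i) = op x ((rightComb (k + P.size)).eval op f i) := by
  induction P generalizing x k i with
  | leaf => rfl
  | node P Q ihP ihQ =>
    let p := P.eval op f i
    let q := Q.eval op f (i + P.size)
    calc op x (op (op p q) ((rightComb k).eval op f (i + (P.size + Q.size))))
        = op x (op p (op q ((rightComb k).eval op f (i + P.size + Q.size)))) := by
          rw [hA, add_assoc]
      _ = op x (op p ((rightComb (k + Q.size)).eval op f (i + P.size))) :=
          congrArg (op x) (ihQ p k (i + P.size))
      _ = op x ((rightComb (k + Q.size + P.size)).eval op f i) := ihP x (k + Q.size) i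
      _ = op x ((rightComb (k + (P.size + Q.size))).eval op f i) := by
          rw [add_assoc, add_comm Q.size]

theorem op_eval_eq_op_eval_rightComb (Q : Bracketing) (x : G) (i : ℕ) :
    op x (Q.eval op f i) = op x ((rightComb (Q.size - 1)).eval op f i) := by
  induction Q generalizing x i with
  | leaf => rfl
  | node P Q _ ihQ =>
    have hsize : Q.size - 1 + P.size = (node P Q).size - 1 := by
      have := Q.size_pos_s8
      simp only [size]
      omega
    calc op x (op (P.eval op f i) (Q.eval op f (i + P.size)))
        = op x ((node P (rightComb (Q.size - 1))).eval op f i) := congrArg (op x) (ihQ _ _)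
      _ = op x ((rightComb ((node P Q).size - 1)).eval op f i) := by
          rw [op_eval_node_rightComb hA, hsize]

theorem op_eval_eq_of_size_eq {Q Q' : Bracketing} (hsize : Q.size = Q'.size) (x : G) (i : ℕ) :
    op x (Q.eval op f i) = op x (Q'.eval op f i) := by
  rw [op_eval_eq_op_eval_rightComb hA f Q, op_eval_eq_op_eval_rightComb hA f Q', hsize]

theorem eval_eq_of_leftFactorSizes_eq :
    ∀ {B B' : Bracketing}, B.size = B'.size → B.leftFactorSizes = B'.leftFactorSizes →
      ∀ i, B.eval op f i = B'.eval op f i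
  | leaf, leaf, _, _, _ => rfl
  | node P Q, node P' Q', hsize, hsizes, i => by
    obtain ⟨hP, hPsizes⟩ := List.cons.inj hsizes
    have hQ : Q.size = Q'.size := by
      simp only [size] at hsize
      omega
    calc op (P.eval op f i) (Q.eval op f (i + P.size))
        = op (P'.eval op f i) (Q.eval op f (i + P'.size)) := by
          rw [eval_eq_of_leftFactorSizes_eq hP hPsizes, hP]
      _ = op (P'.eval op f i) (Q'.eval op f (i + P'.size)) := op_eval_eq_of_size_eq hA f hQ _ _

end Eval

end Bracketing

/-- In a groupoid satisfying `x*(y*(z*u)) = x*((y*z)*u)`, two bracketings of the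
same size whose sets `{|lⁱ(B)| : i ≥ 1}` of iterated left-factor sizes coincide
induce the same function. -/
theorem bracketing_eq_of_leftFactorSizes_eq
    {G : Type*} (op : G → G → G)
    (hA : ∀ x y z u : G, op x (op y (op z u)) = op x (op (op y z) u))
    (B B' : Bracketing) (n : ℕ) (hB : B.size = n) (hB' : B'.size = n)
    (hset : {m | m ∈ B.leftFactorSizes} = {m | m ∈ B'.leftFactorSizes}) :
    ∀ f : ℕ → G, B.eval op f 0 = B'.eval op f 0 := by
  intro f
  have hsizes : B.leftFactorSizes = B'.leftFactorSizes :=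
    B.sortedGT_leftFactorSizes.eq_of_mem_iff B'.sortedGT_leftFactorSizes
      fun m => Set.ext_iff.1 hset m
  exact Bracketing.eval_eq_of_leftFactorSizes_eq hA f (hB.trans hB'.symm) hsizes 0
end

section
/- Let G be an idempotent groupoid satisfying the identity x*(y*x) = x*y for all x, y ∈ G. If a, b ∈ G are such that a*x = b*x for all x ∈ G, then a = b. -/
section IdempotentGroupoid

variable {G : Type*} {op : G → G → G}

theorem op_eq_right_antisymm (idem : ∀ x : G, op x x = x)
    (h : ∀ x y : G, op x (op y x) = op x y) {a b : G}
    (hab : op a b = b) (hba : op b a = a) : a = b :=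
  calc
    a = op a a := (idem a).symm
    _ = op a (op b a) := by rw [hba]
    _ = op a b := h a b
    _ = b := hab

theorem left_translation_injective_general (idem : ∀ x : G, op x x = x)
    (h : ∀ x y : G, op x (op y x) = op x y) {a b : G}
    (agree_left : op a a = op b a) (agree_right : op a b = op b b) : a = b :=
  op_eq_right_antisymm idem h (agree_right.trans (idem b)) (agree_left.symm.trans (idem a))

end IdempotentGroupoid

/-- In an idempotent groupoid satisfying `x*(y*x) = x*y`, elements inducing the
same left translation are equal: if `a*x = b*x` for all `x`, then `a = b`. -/
theorem left_translation_injective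
    {G : Type*} (op : G → G → G)
    (idem : ∀ x : G, op x x = x)
    (h : ∀ x y : G, op x (op y x) = op x y)
    (a b : G) (hab : ∀ x : G, op a x = op b x) :
    a = b :=
  left_translation_injective_general idem h (hab a) (hab b)
end

section
/- Let G be a Szász–Hájek groupoid whose unique nonassociative triple is (a, b, c). Then for all x, y ∈ G: x*y = a implies x = a or y = a; x*y = b implies x = b or y = b; and x*y = c implies x = c or y = c. -/
/-!
The elements that associate with everything in a fixed position (left, middle or right) of a triple
are closed under multiplication: one goes four steps around the pentagon of bracketings of a
product of four elements. If `(a, b, c)` is the only nonassociative triple, then `a`, `b` and `c`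
are the only elements outside these three subsemigroups respectively, so a product equal to one
of them must already have it as a factor.
-/

section Nuclei

variable (G : Type*) [Mul G]

/-- The left nucleus of a groupoid: the elements that associate with any two elements to their
right. -/
def leftNucleus : Subsemigroup G where
  carrier := {x | ∀ y z, x * y * z = x * (y * z)}
  mul_mem' := by
    intro x x' hx hx' y z
    calc x * x' * y * z = x * (x' * y) * z := by rw [hx]
      _ = x * (x' * y * z) := hx _ _
      _ = x * (x' * (y * z)) := by rw [hx']
      _ = x * x' * (y * z) := (hx _ _).symm

/-- The middle nucleus of a groupoid: the elements that associate with any element to their left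
and any element to their right. -/
def middleNucleus : Subsemigroup G where
  carrier := {y | ∀ x z, x * y * z = x * (y * z)}
  mul_mem' := by
    intro y y' hy hy' x z
    calc x * (y * y') * z = x * y * y' * z := by rw [hy]
      _ = x * y * (y' * z) := hy' _ _
      _ = x * (y * (y' * z)) := hy _ _
      _ = x * (y * y' * z) := by rw [hy']

/-- The right nucleus of a groupoid: the elements that associate with any two elements to their
left. -/
def rightNucleus : Subsemigroup G where
  carrier := {z | ∀ x y, x * y * z = x * (y * z)}
  mul_mem' := by
    intro z z' hz hz' x y
    calc x * y * (z * z') = x * y * z * z' := (hz' _ _).symm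
      _ = x * (y * z) * z' := by rw [hz]
      _ = x * (y * z * z') := hz' _ _
      _ = x * (y * (z * z')) := by rw [hz']

variable {G}

theorem mem_leftNucleus {x : G} : x ∈ leftNucleus G ↔ ∀ y z, x * y * z = x * (y * z) :=
  Iff.rfl

theorem mem_middleNucleus {y : G} : y ∈ middleNucleus G ↔ ∀ x z, x * y * z = x * (y * z) :=
  Iff.rfl

theorem mem_rightNucleus {z : G} : z ∈ rightNucleus G ↔ ∀ x y, x * y * z = x * (y * z) :=
  Iff.rfl

end Nuclei

theorem eq_or_eq_of_mul_eq_of_notMem_iff {M : Type*} [Mul M] {S : Subsemigroup M} {m : M}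
    (hS : ∀ x, x ∉ S ↔ x = m) {x y : M} (hxy : x * y = m) : x = m ∨ y = m := by
  rw [← hS, ← hS, ← not_and_or]
  exact fun ⟨hx, hy⟩ ↦ (hS _).mpr hxy (S.mul_mem hx hy)

/-- The condition that makes a groupoid a Szász–Hájek groupoid: `(a, b, c)` is its one and only
nonassociative triple. -/
def IsUniqueNonassocTriple {G : Type*} [Mul G] (a b c : G) : Prop :=
  ∀ x y z : G, x * y * z ≠ x * (y * z) ↔ x = a ∧ y = b ∧ z = c

namespace IsUniqueNonassocTriple

variable {G : Type*} [Mul G] {a b c : G}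

theorem notMem_leftNucleus_iff (h : IsUniqueNonassocTriple a b c) (x : G) :
    x ∉ leftNucleus G ↔ x = a := by
  simp only [mem_leftNucleus, not_forall, h _ _ _, exists_and_left, exists_eq, and_true]

theorem notMem_middleNucleus_iff (h : IsUniqueNonassocTriple a b c) (y : G) :
    y ∉ middleNucleus G ↔ y = b := by
  simp only [mem_middleNucleus, not_forall, h _ _ _, exists_and_left, exists_eq_left,
    exists_eq, and_true]

theorem notMem_rightNucleus_iff (h : IsUniqueNonassocTriple a b c) (z : G) :
    z ∉ rightNucleus G ↔ z = c := by
  simp only [mem_rightNucleus, not_forall, h _ _ _, exists_and_left, exists_eq_left]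

end IsUniqueNonassocTriple

/-- In a Szász–Hájek groupoid with unique nonassociative triple `(a, b, c)`,
if `x*y` equals `a` (resp. `b`, `c`) then one of the factors equals `a`
(resp. `b`, `c`). -/
theorem SH_product_eq_component
    {G : Type*} (op : G → G → G) (a b c : G)
    (hSH : ∀ x y z : G,
      op (op x y) z ≠ op x (op y z) ↔ x = a ∧ y = b ∧ z = c) :
    ∀ x y : G,
      (op x y = a → x = a ∨ y = a) ∧
      (op x y = b → x = b ∨ y = b) ∧
      (op x y = c → x = c ∨ y = c) := by
  let _ : Mul G := ⟨op⟩
  have h : IsUniqueNonassocTriple a b c := hSH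
  exact fun x y ↦
    ⟨eq_or_eq_of_mul_eq_of_notMem_iff h.notMem_leftNucleus_iff,
      eq_or_eq_of_mul_eq_of_notMem_iff h.notMem_middleNucleus_iff,
      eq_or_eq_of_mul_eq_of_notMem_iff h.notMem_rightNucleus_iff⟩
end

section
/- Let G be an idempotent Szász–Hájek groupoid of type (a, b, c), i.e. its unique nonassociative triple (a, b, c) has pairwise distinct components. Then for all x, y ∈ G: x*(x*y) = x*y, (x*y)*y = x*y, x*(y*x) = (x*y)*x, x*(y*(x*y)) = x*y, and (x*y)*(y*x) = (x*y)*x. -/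
/-!
The five bracketings of a product `x y z w` form a pentagon whose edges are instances of
associativity, so a pentagon never has exactly one failing edge. Since `a`, `b`, `c` are distinct,
`(x, x, y)`, `(x, y, y)` and `(x, y, x)` always associate. If `(x, y, x * y)` or `(x * y, y, x)`
were the exceptional triple, it would be the only failing edge of the pentagon of `x y x y`
or `x y y x`. Hence these two triples associate as well, and idempotence gives the identities.
-/

section

variable {G : Type*} {op : G → G → G} {a b c x y z w : G}

/-- The triple `(x, y, z)` is associative for the operation `op`. -/
abbrev AssocAt (op : G → G → G) (x y z : G) : Prop :=
  op (op x y) z = op x (op y z)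

theorem assocAt_op_left_iff (hxyz : AssocAt op x y z) (hyzw : AssocAt op y z w)
    (hx_yz_w : AssocAt op x (op y z) w) :
    AssocAt op (op x y) z w ↔ AssocAt op x y (op z w) := by
  have outer : op (op (op x y) z) w = op x (op y (op z w)) := by
    rw [hxyz, hx_yz_w, hyzw]
  rw [AssocAt, AssocAt, outer, eq_comm]

/-- Every triple other than `(a, b, c)` is associative for `op`. The triple `(a, b, c)` itself may
or may not be, so this covers both semigroups and Szász–Hájek groupoids. -/
def AssocExcept (op : G → G → G) (a b c : G) : Prop :=
  ∀ ⦃x y z : G⦄, ¬ AssocAt op x y z → x = a ∧ y = b ∧ z = c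

namespace AssocExcept

theorem assocAt_of_left_ne (h : AssocExcept op a b c) (hx : x ≠ a) : AssocAt op x y z :=
  by_contra fun hbad => hx (h hbad).1

theorem assocAt_of_right_ne (h : AssocExcept op a b c) (hz : z ≠ c) : AssocAt op x y z :=
  by_contra fun hbad => hz (h hbad).2.2

theorem left_alternative (h : AssocExcept op a b c) (hab : a ≠ b) (x y : G) :
    AssocAt op x x y := by
  by_contra hbad
  obtain ⟨hxa, hxb, -⟩ := h hbad
  exact hab (hxa.symm.trans hxb)

theorem right_alternative (h : AssocExcept op a b c) (hbc : b ≠ c) (x y : G) :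
    AssocAt op x y y := by
  by_contra hbad
  obtain ⟨-, hyb, hyc⟩ := h hbad
  exact hbc (hyb.symm.trans hyc)

theorem flexible (h : AssocExcept op a b c) (hac : a ≠ c) (x y : G) :
    AssocAt op x y x := by
  by_contra hbad
  obtain ⟨hxa, -, hxc⟩ := h hbad
  exact hac (hxa.symm.trans hxc)

theorem assocAt_op_right (h : AssocExcept op a b c) (hbc : b ≠ c) (hxyz : AssocAt op x y z) :
    AssocAt op x y (op z y) := by
  by_contra hbad
  have hy : y ≠ c := (h hbad).2.1.trans_ne hbc
  exact hbad <| (assocAt_op_left_iff hxyz (h.assocAt_of_right_ne hy)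
    (h.assocAt_of_right_ne hy)).1 (h.assocAt_of_right_ne hy)

theorem assocAt_op_left (h : AssocExcept op a b c) (hab : a ≠ b) (hac : a ≠ c) (x y : G) :
    AssocAt op (op x y) y x := by
  by_contra hbad
  have hx : x ≠ a := (h hbad).2.2.trans_ne hac.symm
  exact hbad <| (assocAt_op_left_iff (h.assocAt_of_left_ne hx) (h.left_alternative hab y x)
    (h.assocAt_of_left_ne hx)).2 (h.assocAt_of_left_ne hx)

end AssocExcept

end

/-- In an idempotent Szász–Hájek groupoid of type `(a, b, c)` (pairwise distinct
components), the identities `x*(x*y) = x*y`, `(x*y)*y = x*y`,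
`x*(y*x) = (x*y)*x`, `x*(y*(x*y)) = x*y` and `(x*y)*(y*x) = (x*y)*x` hold. -/
theorem SH_type_abc_identities
    {G : Type*} (op : G → G → G) (a b c : G)
    (idem : ∀ x : G, op x x = x)
    (hSH : ∀ x y z : G,
      op (op x y) z ≠ op x (op y z) ↔ x = a ∧ y = b ∧ z = c)
    (hab : a ≠ b) (hbc : b ≠ c) (hac : a ≠ c) :
    (∀ x y : G, op x (op x y) = op x y) ∧
    (∀ x y : G, op (op x y) y = op x y) ∧
    (∀ x y : G, op x (op y x) = op (op x y) x) ∧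
    (∀ x y : G, op x (op y (op x y)) = op x y) ∧
    (∀ x y : G, op (op x y) (op y x) = op (op x y) x) := by
  have h : AssocExcept op a b c := fun x y z => (hSH x y z).1
  have left_absorb (x y : G) : op x (op x y) = op x y := by
    rw [← h.left_alternative hab x y, idem]
  have right_absorb (x y : G) : op (op x y) y = op x y := by
    rw [h.right_alternative hbc x y, idem]
  refine ⟨left_absorb, right_absorb, fun x y => (h.flexible hac x y).symm, fun x y => ?_,
    fun x y => ?_⟩
  · rw [← h.assocAt_op_right hbc (h.flexible hac x y), idem]
  · rw [← h.assocAt_op_left hab hac x y, right_absorb]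
end

section
/- Let G be an idempotent Szász–Hájek groupoid of type (a, b, c), i.e. its unique nonassociative triple (a, b, c) has pairwise distinct components. Then for all x, y ∈ G: ((x*y)*x)*((y*x)*y) = x*y. -/
/-!
Since `a ≠ c`, the groupoid is flexible, and the exceptional triple can stop the rewriting
`(xyx)(yxy) = (xyx)(y(xy)) = ((xyx)y)(xy) = ((xy)(xy))(xy) = xy` in only two ways. Passing to the
opposite groupoid gives a second rewriting, `(xyx)(yxy) = (xy)(x(y(xy))) = xy`. Both are stopped
only if `x = a`, `y = b`, `ab = c`, `ca = a`, or dually `x = b`, `y = c`, `bc = a`, `ca = c`. In the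
first situation the identity reads `a(bc) = c`, which is clear for `b = c` and otherwise holds
because `a(bc) = a(bab) = (aba)b = ab`.
-/

open MulOpposite

/-- The groupoid `G` is associative, except possibly at the triple `(a, b, c)`. Unlike the defining
condition of a Szász–Hájek groupoid, this allows `G` to be a semigroup. -/
def AssocExceptAt {G : Type*} [Mul G] (a b c : G) : Prop :=
  ∀ ⦃x y z : G⦄, (x, y, z) ≠ (a, b, c) → x * y * z = x * (y * z)

namespace AssocExceptAt

variable {G : Type*} [Mul G] {a b c x y : G}

protected theorem op (h : AssocExceptAt a b c) : AssocExceptAt (op c) (op b) (op a) := by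
  intro x y z hxyz
  refine unop_injective (h fun heq ↦ hxyz ?_).symm
  simp_all [← unop_inj]

theorem flexible (h : AssocExceptAt a b c) (hac : a ≠ c) (x y : G) :
    x * y * x = x * (y * x) :=
  h (by grind)

theorem mul_mul_eq_right (h : AssocExceptAt a b c) (hac : a ≠ c) (idem : ∀ x : G, x * x = x)
    (hab : a * b = c) (hca : c * a = a) : a * (b * c) = c := by
  by_cases hbc : b = c
  · rw [← hbc, idem, hab, hbc]
  have haba : a * (b * a) = a := by rw [← h.flexible hac, hab, hca]
  calc a * (b * c) = a * (b * a * b) := by rw [h.flexible hac, hab]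
    _ = a * (b * a) * b := (h (by simp [hbc])).symm
    _ = c := by rw [haba, hab]

theorem mul_mul_eq_left (h : AssocExceptAt a b c) (hac : a ≠ c) (idem : ∀ x : G, x * x = x)
    (hbc : b * c = a) (hca : c * a = c) : a * b * c = a :=
  op_injective <| h.op.mul_mul_eq_right (op_injective.ne hac.symm)
    (fun x ↦ unop_injective (idem x.unop)) (congrArg op hbc) (congrArg op hca)

theorem eq_triple_or_eq_triple_of_ne (h : AssocExceptAt a b c) (hac : a ≠ c)
    (idem : ∀ x : G, x * x = x) (hne : x * y * x * (y * x * y) ≠ x * y) :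
    (x * y * x, y, x * y) = (a, b, c) ∨ (x * y, x, y) = (a, b, c) := by
  by_contra! hxy
  apply hne
  calc x * y * x * (y * x * y) = x * y * x * (y * (x * y)) := by rw [h.flexible hac y x]
    _ = x * y * x * y * (x * y) := (h hxy.1).symm
    _ = x * y * (x * y) * (x * y) := by rw [h hxy.2]
    _ = x * y := by rw [idem, idem]

theorem eq_triple_or_eq_triple_of_ne' (h : AssocExceptAt a b c) (hac : a ≠ c)
    (idem : ∀ x : G, x * x = x) (hne : x * y * x * (y * x * y) ≠ x * y) :
    (x * y, x, y * x * y) = (a, b, c) ∨ (x, y, x * y) = (a, b, c) := by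
  have dual := h.op.eq_triple_or_eq_triple_of_ne (x := op y) (y := op x)
    (op_injective.ne hac.symm) (fun x ↦ unop_injective (idem x.unop))
  simp only [← op_mul, op_injective.ne_iff, ← h.flexible hac, Prod.mk.injEq, op_inj] at dual ⊢
  grind

end AssocExceptAt

theorem SH_type_abc_xyx_yxy_general {G : Type*} [Mul G] {a b c : G}
    (h : AssocExceptAt a b c) (hac : a ≠ c) (idem : ∀ x : G, x * x = x) (x y : G) :
    x * y * x * (y * x * y) = x * y := by
  by_contra hne
  have hleft := h.eq_triple_or_eq_triple_of_ne hac idem hne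
  have hright := h.eq_triple_or_eq_triple_of_ne' hac idem hne
  simp only [Prod.mk.injEq] at hleft hright
  rcases hleft with ⟨hxyx, rfl, hxy⟩ | ⟨hxy, rfl, rfl⟩
  · obtain ⟨hxy', _⟩ | ⟨rfl, _⟩ := hright
    · exact hac (hxy'.symm.trans hxy)
    rw [hxy] at hxyx
    rw [h.flexible hac y x, hxy, hxyx] at hne
    exact hne (h.mul_mul_eq_right hac idem hxy hxyx)
  · obtain ⟨_, _, hyxy⟩ | ⟨_, _, hxy'⟩ := hright
    swap
    · exact hac (hxy.symm.trans hxy')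
    rw [hyxy, hxy] at hne
    rw [h.flexible hac y x, hxy] at hyxy
    exact hne (h.mul_mul_eq_left hac idem hxy hyxy)

/-- In an idempotent Szász–Hájek groupoid of type `(a, b, c)` (pairwise distinct
components), the identity `((x*y)*x)*((y*x)*y) = x*y` holds. -/
theorem SH_type_abc_xyx_yxy
    {G : Type*} (op : G → G → G) (a b c : G)
    (idem : ∀ x : G, op x x = x)
    (hSH : ∀ x y z : G,
      op (op x y) z ≠ op x (op y z) ↔ x = a ∧ y = b ∧ z = c)
    (hab : a ≠ b) (hbc : b ≠ c) (hac : a ≠ c) :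
    ∀ x y : G, op (op (op x y) x) (op (op y x) y) = op x y := by
  let _ : Mul G := ⟨op⟩
  exact SH_type_abc_xyx_yxy_general (a := a) (b := b) (c := c)
    (fun x y z hne ↦ not_imp_comm.1 (hSH x y z).1 (by simpa using hne)) hac idem
end

section
/- Let G be a groupoid satisfying the 𝓑 identities (x*x = x, x*(x*y) = x*y, x*(y*x) = x*y, (x*y)*x = x*y, (x*y)*y = x*y, (x*y)*(y*x) = x*y for all x, y), and suppose G is a Szász–Hájek groupoid of type (a, b, c), i.e. its unique nonassociative triple (a, b, c) has pairwise distinct components, and suppose moreover that b*c = c and c*b = c. Then c*(a*b) = c and c*a = c. -/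
namespace IsUniqueNonassocTriple

variable {G : Type*} [Mul G] {a b c : G}

theorem mul_mul_ne_mul_mul (h : IsUniqueNonassocTriple a b c) : a * b * c ≠ a * (b * c) :=
  (h a b c).2 ⟨rfl, rfl, rfl⟩

theorem mul_assoc_of_snd_ne (h : IsUniqueNonassocTriple a b c) {y : G} (hy : y ≠ b) (x z : G) :
    x * y * z = x * (y * z) :=
  not_ne_iff.1 fun hne ↦ hy ((h x y z).1 hne).2.1

theorem mul_assoc_of_thd_ne (h : IsUniqueNonassocTriple a b c) {z : G} (hz : z ≠ c) (x y : G) :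
    x * y * z = x * (y * z) :=
  not_ne_iff.1 fun hne ↦ hz ((h x y z).1 hne).2.2

theorem mul_mul_mul_fst_eq (h : IsUniqueNonassocTriple a b c) (hbc : b ≠ c) (hca : c * a ≠ c) :
    a * b * c * a = a * (b * c * a) :=
  calc a * b * c * a = a * b * (c * a) := h.mul_assoc_of_snd_ne hbc.symm _ _
    _ = a * (b * (c * a)) := h.mul_assoc_of_thd_ne hca _ _
    _ = a * (b * c * a) := by rw [h.mul_assoc_of_snd_ne hbc.symm b a]

theorem mul_mul_eq_of_mul_mul_mul_fst_eq (h : IsUniqueNonassocTriple a b c) (hbc : b ≠ c)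
    (hB4 : ∀ x y : G, x * y * x = x * y) (hcb : c * b = c) (habca : a * b * c * a = a * c) :
    a * b * c = a * c :=
  calc a * b * c = a * b * c * (a * b) := (hB4 _ _).symm
    _ = a * b * c * a * b := (h.mul_assoc_of_thd_ne hbc _ _).symm
    _ = a * c * b := by rw [habca]
    _ = a * (c * b) := h.mul_assoc_of_snd_ne hbc.symm _ _
    _ = a * c := by rw [hcb]

theorem mul_fst_eq_self (h : IsUniqueNonassocTriple a b c) (hbc : b ≠ c)
    (hB3 : ∀ x y : G, x * (y * x) = x * y) (hB4 : ∀ x y : G, x * y * x = x * y)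
    (hbc' : b * c = c) (hcb : c * b = c) : c * a = c := by
  by_contra hca
  have habca : a * b * c * a = a * c :=
    calc a * b * c * a = a * (b * c * a) := h.mul_mul_mul_fst_eq hbc hca
      _ = a * (c * a) := by rw [hbc']
      _ = a * c := hB3 a c
  have habc : a * b * c = a * (b * c) := by
    rw [hbc', h.mul_mul_eq_of_mul_mul_mul_fst_eq hbc hB4 hcb habca]
  exact h.mul_mul_ne_mul_mul habc

end IsUniqueNonassocTriple

theorem SH_in_B_case4_products_general {G : Type*} [Mul G] {a b c : G}
    (h : IsUniqueNonassocTriple a b c) (hbc : b ≠ c)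
    (hB3 : ∀ x y : G, x * (y * x) = x * y) (hB4 : ∀ x y : G, x * y * x = x * y)
    (hbc' : b * c = c) (hcb : c * b = c) : c * (a * b) = c ∧ c * a = c := by
  have hca : c * a = c := h.mul_fst_eq_self hbc hB3 hB4 hbc' hcb
  have hcab : c * (a * b) = c := by rw [← h.mul_assoc_of_thd_ne hbc, hca, hcb]
  exact ⟨hcab, hca⟩

/-- In a Szász–Hájek groupoid of type `(a, b, c)` satisfying the 𝓑 identities,
if `b*c = c` and `c*b = c`, then `c*(a*b) = c` and `c*a = c`. -/
theorem SH_in_B_case4_products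
    {G : Type*} (op : G → G → G) (a b c : G)
    (hB1 : ∀ x : G, op x x = x)
    (hB2 : ∀ x y : G, op x (op x y) = op x y)
    (hB3 : ∀ x y : G, op x (op y x) = op x y)
    (hB4 : ∀ x y : G, op (op x y) x = op x y)
    (hB5 : ∀ x y : G, op (op x y) y = op x y)
    (hB6 : ∀ x y : G, op (op x y) (op y x) = op x y)
    (hSH : ∀ x y z : G,
      op (op x y) z ≠ op x (op y z) ↔ x = a ∧ y = b ∧ z = c)
    (hab : a ≠ b) (hbc : b ≠ c) (hac : a ≠ c)
    (hbc' : op b c = c) (hcb : op c b = c) :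
    op c (op a b) = c ∧ op c a = c := by
  let _ : Mul G := ⟨op⟩
  exact SH_in_B_case4_products_general hSH hbc hB3 hB4 hbc' hcb
end

section
/- Let G be a groupoid satisfying the three identities x*x = x, x*(y*z) = x*y, and (x*y)*y = x*y for all x, y, z ∈ G. Then G also satisfies: x*(y*x) = x*y, (x*y)*x = x*y, (x*y)*(y*x) = x*y, x*(y*(z*u)) = x*((y*z)*u), and, for every n ≥ 0 and all x, y₁,…,yₙ ∈ G, the absorption identity x*⟨x·y₁·…·yₙ⟩_L = x (where ⟨x·y₁·…·yₙ⟩_L denotes the left-associated product of x, y₁, …, yₙ). -/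
/-! The identity `x*(y*z) = x*y` says that every left translation `f = (x * ·)` satisfies
`f (y*z) = f y`, so a right factor may always be replaced by its leftmost letter. -/

section

variable {G : Type*} {β : Sort*} {op : G → G → G} {f : G → β}

theorem apply_leftAssoc (hf : ∀ y z, f (op y z) = f y) (x : G) (l : List G) :
    f (leftAssoc op x l) = f x := by
  induction l generalizing x with
  | nil => rfl
  | cons y l ih => exact (ih (op x y)).trans (hf x y)

theorem apply_op_assoc (hf : ∀ y z, f (op y z) = f y) (x y z : G) :
    f (op x (op y z)) = f (op (op x y) z) :=
  calc
    f (op x (op y z)) = f x := hf x (op y z)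
    _ = f (op x y) := (hf x y).symm
    _ = f (op (op x y) z) := (hf (op x y) z).symm

theorem op_op_self_left (op_self : ∀ x, op x x = x)
    (op_op_right : ∀ x y z, op x (op y z) = op x y) (x y : G) : op (op x y) x = op x y :=
  calc
    op (op x y) x = op (op x y) (op x y) := (op_op_right (op x y) x y).symm
    _ = op x y := op_self (op x y)

theorem op_op_op_swap (op_op_right : ∀ x y z, op x (op y z) = op x y)
    (op_op_self_right : ∀ x y, op (op x y) y = op x y) (x y : G) :
    op (op x y) (op y x) = op x y :=
  calc
    op (op x y) (op y x) = op (op x y) y := op_op_right (op x y) y x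
    _ = op x y := op_op_self_right x y

theorem op_leftAssoc_self (op_self : ∀ x, op x x = x)
    (op_op_right : ∀ x y z, op x (op y z) = op x y) (x : G) (l : List G) :
    op x (leftAssoc op x l) = x :=
  (apply_leftAssoc (op_op_right x) x l).trans (op_self x)

end

/-- A groupoid satisfying `x*x = x`, `x*(y*z) = x*y` and `(x*y)*y = x*y` also
satisfies `x*(y*x) = x*y`, `(x*y)*x = x*y`, `(x*y)*(y*x) = x*y`,
`x*(y*(z*u)) = x*((y*z)*u)`, and the absorption identities
`x*⟨x·y₁·…·yₙ⟩_L = x` for all `n ≥ 0`. -/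
theorem D_cap_A_identities
    {G : Type*} (op : G → G → G)
    (h1 : ∀ x : G, op x x = x)
    (h2 : ∀ x y z : G, op x (op y z) = op x y)
    (h3 : ∀ x y : G, op (op x y) y = op x y) :
    (∀ x y : G, op x (op y x) = op x y) ∧
    (∀ x y : G, op (op x y) x = op x y) ∧
    (∀ x y : G, op (op x y) (op y x) = op x y) ∧
    (∀ x y z u : G, op x (op y (op z u)) = op x (op (op y z) u)) ∧
    (∀ (x : G) (l : List G), op x (leftAssoc op x l) = x) :=
  ⟨fun x y => h2 x y x, op_op_self_left h1 h2, op_op_op_swap h2 h3,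
    fun x => apply_op_assoc (h2 x), op_leftAssoc_self h1 h2⟩
end

section
/- For k ≥ 2 let A_k be the groupoid on the set ℤ_k ∪ {e} (disjoint union of the integers modulo k with an extra element e) with multiplication x*y = y if y ≠ e; x*e = x+1 if x ≠ e; e*e = e. Then A_k is idempotent and not associative, and for every n ≥ 3 with k dividing n−2, A_k satisfies the identity ⟨x₁⋯xₙ⟩_L = x₁*⟨x₂⋯xₙ⟩_L for all x₁,…,xₙ ∈ A_k. In particular, for n ≥ 4, A_{n−2} is an idempotent nonassociative groupoid satisfying ⟨x₁⋯xₙ⟩_L = x₁*⟨x₂⋯xₙ⟩_L. -/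
/-- The multiplication of the groupoid `A_k` on `ℤ_k ∪ {e}`, where the extra
element `e` is represented by `none`: `x*y = y` if `y ≠ e`; `x*e = x+1` if
`x ≠ e`; `e*e = e`. -/
def akOp (k : ℕ) : Option (ZMod k) → Option (ZMod k) → Option (ZMod k)
  | _, some b => some b
  | some a, none => some (a + 1)
  | none, none => none

/-!
Write `e` for `none`. Right multiplication by `e` fixes `e` and acts on `ℤ_k` as the successor, so
`m` such multiplications amount to adding `m`; right multiplication by an element of `ℤ_k` is a
constant map with value in `ℤ_k`. Let `k` divide the length of `l = [x₃, …, xₙ]`. If all its entries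
are `e`, multiplying by them from the right changes nothing, and both sides are `x₁ * x₂`. Otherwise
the product along `l` does not depend on where it starts and lies in `ℤ_k`, so both sides are
`⟨x₂⋯xₙ⟩_L`.
-/

section Generic

variable {G : Type*} (op : G → G → G)

lemma leftAssoc_cons (x y : G) (l : List G) :
    leftAssoc op x (y :: l) = leftAssoc op (op x y) l :=
  rfl

lemma leftAssoc_append (x : G) (l₁ l₂ : List G) :
    leftAssoc op x (l₁ ++ l₂) = leftAssoc op (leftAssoc op x l₁) l₂ :=
  List.foldl_append

end Generic

section AkOp

variable {k : ℕ}

lemma akOp_none (x : Option (ZMod k)) : akOp k x none = x.map (· + 1) := by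
  cases x <;> rfl

lemma akOp_of_ne_none (x : Option (ZMod k)) {y : Option (ZMod k)} (hy : y ≠ none) :
    akOp k x y = y := by
  obtain ⟨b, rfl⟩ := Option.ne_none_iff_exists'.mp hy
  cases x <;> rfl

lemma akOp_self (x : Option (ZMod k)) : akOp k x x = x := by
  cases x <;> rfl

lemma akOp_ne_none {x : Option (ZMod k)} (hx : x ≠ none) (y : Option (ZMod k)) :
    akOp k x y ≠ none := by
  by_cases hy : y = none
  · simpa only [hy, akOp_none, ne_eq, Option.map_eq_none_iff] using hx
  · rwa [akOp_of_ne_none x hy]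

lemma not_assoc_akOp (hk : k ≠ 1) :
    ¬∀ x y z, akOp k (akOp k x y) z = akOp k x (akOp k y z) := by
  intro assoc
  have : Nontrivial (ZMod k) := ZMod.nontrivial_iff.mpr hk
  have two_eq_one : (0 + 1 + 1 : ZMod k) = 0 + 1 :=
    Option.some_injective _ (assoc (some 0) none none)
  exact one_ne_zero (add_eq_left.mp two_eq_one)

lemma leftAssoc_akOp_replicate_none (x : Option (ZMod k)) (m : ℕ) :
    leftAssoc (akOp k) x (List.replicate m none) = x.map (· + (m : ZMod k)) := by
  induction m generalizing x with
  | zero => cases x <;> simp [leftAssoc]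
  | succ m ih =>
    rw [List.replicate_succ, leftAssoc_cons, akOp_none, ih, Option.map_map]
    congr 1
    funext a
    simp only [Function.comp_apply, Nat.cast_succ, add_assoc, add_comm (1 : ZMod k)]

lemma leftAssoc_akOp_ne_none {x : Option (ZMod k)} (hx : x ≠ none) (l : List (Option (ZMod k))) :
    leftAssoc (akOp k) x l ≠ none := by
  induction l generalizing x with
  | nil => exact hx
  | cons y _ ih => exact ih (akOp_ne_none hx y)

lemma leftAssoc_akOp_eq_of_mem {l : List (Option (ZMod k))} {z : Option (ZMod k)}
    (hzl : z ∈ l) (hz : z ≠ none) (x y : Option (ZMod k)) :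
    leftAssoc (akOp k) x l = leftAssoc (akOp k) y l := by
  obtain ⟨l₁, l₂, rfl⟩ := List.append_of_mem hzl
  simp only [leftAssoc_append, leftAssoc_cons, akOp_of_ne_none _ hz]

lemma leftAssoc_akOp_ne_none_of_mem {l : List (Option (ZMod k))} {z : Option (ZMod k)}
    (hzl : z ∈ l) (hz : z ≠ none) (x : Option (ZMod k)) :
    leftAssoc (akOp k) x l ≠ none := by
  rw [leftAssoc_akOp_eq_of_mem hzl hz x z]
  exact leftAssoc_akOp_ne_none hz l

theorem leftAssoc_akOp_cons_of_dvd_length {l : List (Option (ZMod k))} (hl : k ∣ l.length)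
    (x y : Option (ZMod k)) :
    leftAssoc (akOp k) x (y :: l) = akOp k x (leftAssoc (akOp k) y l) := by
  rw [leftAssoc_cons]
  by_cases all_none : ∀ z ∈ l, z = none
  · have leftAssoc_eq_self (u : Option (ZMod k)) : leftAssoc (akOp k) u l = u := by
      rw [List.eq_replicate_of_mem all_none, leftAssoc_akOp_replicate_none,
        (ZMod.natCast_eq_zero_iff _ _).mpr hl]
      simp only [add_zero, Option.map_id']
    rw [leftAssoc_eq_self, leftAssoc_eq_self]
  · push Not at all_none
    obtain ⟨z, hzl, hz⟩ := all_none
    calc leftAssoc (akOp k) (akOp k x y) l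
      _ = leftAssoc (akOp k) y l := leftAssoc_akOp_eq_of_mem hzl hz _ _
      _ = akOp k x (leftAssoc (akOp k) y l) :=
        (akOp_of_ne_none x (leftAssoc_akOp_ne_none_of_mem hzl hz y)).symm

end AkOp

/-- For `k ≥ 2`, the groupoid `A_k` is idempotent, not associative, and for
every `n ≥ 3` with `k ∣ n - 2` it satisfies the identity
`⟨x₁⋯xₙ⟩_L = x₁*⟨x₂⋯xₙ⟩_L`. -/
theorem akOp_idempotent_nonassociative_nulla
    (k : ℕ) (hk : 2 ≤ k) :
    (∀ x, akOp k x x = x) ∧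
    ¬(∀ x y z, akOp k (akOp k x y) z = akOp k x (akOp k y z)) ∧
    (∀ n : ℕ, 3 ≤ n → k ∣ n - 2 →
      ∀ (x y : Option (ZMod k)) (l : List (Option (ZMod k))),
        (y :: l).length = n - 1 →
        leftAssoc (akOp k) x (y :: l) = akOp k x (leftAssoc (akOp k) y l)) := by
  refine ⟨akOp_self, not_assoc_akOp (by omega), fun n _ hdvd x y l hlen => ?_⟩
  have length_eq : l.length = n - 2 := by
    rw [List.length_cons] at hlen
    omega
  exact leftAssoc_akOp_cons_of_dvd_length (length_eq ▸ hdvd) x y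
end
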